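/- arXiv:2006.15269 — 4 statements merged into one kernel-verified Lean document; each statement's English description precedes it below -/
import Mathlib

section
/- Let I : [0,1]² → [0,1] be a fuzzy implication such that the function f(y) = I(1,y) is strictly increasing on [0,1], and let A_I(x,y) = inf{z ∈ [0,1] : I(x,z) ≥ y}. Let U and V be nonempty sets, D a normal fuzzy set on U and B a fuzzy set on V. Then the ACRI output with input D' = D reproduces B exactly: sup_{x ∈ U} A_I(D(x), I(D(x), B(y))) = B(y) for all y ∈ V. -/
instance : Fact ((0:ℝ) ≤ 1) := ⟨zero_le_one⟩

/-- The operation `A_I(x,y) = inf {z ∈ [0,1] | I(x,z) ≥ y}`. -/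
noncomputable def coresid (Imp : unitInterval → unitInterval → unitInterval)
    (x y : unitInterval) : unitInterval :=
  sInf {z : unitInterval | y ≤ Imp x z}

section GeneralizedInverse

variable {α β : Type*}

/-- The generalized inverse `b ↦ inf {a | b ≤ f a}` of a map `f`, as for quantile functions, with no
monotonicity imposed on `f`. The operation `A_I(x, ·)` is the generalized inverse of `I(x, ·)`. -/
def generalizedInverse [InfSet α] [LE β] (f : α → β) (b : β) : α :=
  sInf {a : α | b ≤ f a}

variable [CompleteLattice α] [Preorder β]

theorem generalizedInverse_apply_le (f : α → β) (a : α) : generalizedInverse f (f a) ≤ a :=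
  sInf_le le_rfl

theorem le_generalizedInverse_apply {f : α → β} {a : α} (h : ∀ z, f a ≤ f z → a ≤ z) :
    a ≤ generalizedInverse f (f a) :=
  le_sInf h

end GeneralizedInverse

theorem coresid_eq_generalizedInverse (Imp : unitInterval → unitInterval → unitInterval)
    (x : unitInterval) : coresid Imp x = generalizedInverse (Imp x) :=
  rfl

theorem stmt7_general {X α β U V : Type*} [CompleteLattice α] [Preorder β]
    (Imp : X → α → β) {e : X} (hreflect : ∀ a b, Imp e a ≤ Imp e b → a ≤ b)
    (D : U → X) (B : V → α) (hD : ∃ x₀ : U, D x₀ = e) :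
    ∀ y : V, (⨆ x : U, generalizedInverse (Imp (D x)) (Imp (D x) (B y))) = B y := by
  intro y
  obtain ⟨x₀, rfl⟩ := hD
  apply le_antisymm
  · exact iSup_le fun x => generalizedInverse_apply_le (Imp (D x)) (B y)
  · exact le_iSup_of_le x₀ (le_generalizedInverse_apply (hreflect (B y)))

/-- Theorem 4.2(iv): if `I` is a fuzzy implication with `f(y) = I(1,y)` strictly
increasing and `D` is normal, then the ACRI output with input `D' = D` satisfies
(GMP4): `sup_x A_I(D(x), I(D(x), B(y))) = B(y)` for all `y`. -/
theorem stmt7 (Imp : unitInterval → unitInterval → unitInterval)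
    (hImono₁ : ∀ y : unitInterval, Antitone fun x => Imp x y)
    (hImono₂ : ∀ x : unitInterval, Monotone (Imp x))
    (hI00 : Imp 0 0 = 1) (hI11 : Imp 1 1 = 1) (hI10 : Imp 1 0 = 0)
    (hstrict : StrictMono fun y : unitInterval => Imp 1 y)
    (U V : Type) [Nonempty U] [Nonempty V]
    (D : U → unitInterval) (B : V → unitInterval)
    (hD : ∃ x₀ : U, D x₀ = 1) :
    ∀ y : V, (⨆ x : U, coresid Imp (D x) (Imp (D x) (B y))) = B y := by
  simp only [coresid_eq_generalizedInverse]
  exact stmt7_general Imp (fun _ _ => hstrict.le_iff_le.mp) D B hD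
end

section
/- Let A : [0,1]² → [0,1] be a binary aggregation function that is left-continuous in its second variable and has 1 as a left neutral element (A(1,x) = x for all x), and let I be a fuzzy implication satisfying (NP) (I(1,y) = y for all y). Define I_A(x,y) = sup{z ∈ [0,1] : A(x,z) ≤ y}. Then the following are equivalent: (a) for all nonempty sets U, V and all fuzzy sets D, D', D'' on U and B on V, the ACRI output B'(y) = sup_{x ∈ U} A(D'(x), I(D(x), B(y))) satisfies (GMP1) if D' is normal then B ⊆ B', (GMP2) if D' ⊆ D'' then B' ⊆ B'', (GMP3) if D' = D^C is normal then B' ≡ 1, and (GMP4) if D' = D is normal then B' = B; (b) I(x,y) ≤ I_A(x,y) for all x, y ∈ [0,1]. -/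
/-- The residual operation `I_A(x,y) = sup {z ∈ [0,1] | A(x,z) ≤ y}`. -/
noncomputable def resid (A : unitInterval → unitInterval → unitInterval)
    (x y : unitInterval) : unitInterval :=
  sSup {z : unitInterval | A x z ≤ y}

open Set

section Residuation

variable {α β : Type*}

lemma leftOrdContinuous_of_continuousWithinAt_Iio
    [LinearOrder α] [OrderBot α] [TopologicalSpace α] [OrderTopology α]
    [LinearOrder β] [TopologicalSpace β] [OrderTopology β] {f : α → β} (hf : Monotone f)
    (hlc : ∀ z, z ≠ ⊥ → ContinuousWithinAt f (Iio z) z) : LeftOrdContinuous f := by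
  refine hf.leftOrdContinuous fun z => continuousWithinAt_Iio_iff_Iic.mp ?_
  rcases eq_or_ne z ⊥ with rfl | hz
  · simp only [Iio_bot, ContinuousWithinAt, nhdsWithin_empty, Filter.tendsto_bot]
  · exact hlc z hz

lemma galoisConnection_sSup_of_leftOrdContinuous [CompleteLattice α] [Preorder β] [OrderBot β]
    {f : α → β} (hf : LeftOrdContinuous f) (hbot : f ⊥ ≤ ⊥) :
    GaloisConnection f fun y => sSup {z | f z ≤ y} := by
  refine fun z y => ⟨fun h => le_sSup h, fun h => (hf.mono h).trans ?_⟩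
  have hne : {z | f z ≤ y}.Nonempty := ⟨⊥, hbot.trans bot_le⟩
  exact (hf hne (isLUB_sSup _)).2 (forall_mem_image.mpr fun _ hz => hz)

lemma galoisConnection_sSup_of_leftNeutral [CompleteLattice α] {A : α → α → α}
    (hmono : ∀ z, Monotone fun x => A x z) (hcont : ∀ x, LeftOrdContinuous (A x))
    (hneut : ∀ z, A ⊤ z = z) (x : α) :
    GaloisConnection (A x) fun y => sSup {z | A x z ≤ y} :=
  galoisConnection_sSup_of_leftOrdContinuous (hcont x) <|
    (hmono ⊥ le_top).trans_eq (hneut ⊥)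

end Residuation

section ACRI

variable {L U V : Type*} [CompleteLattice L]

/-- The output `B'` of the ACRI inference scheme with aggregation function `A` and implication
`Imp`, for the rule `D → B` and the observation `D'`; fuzzy sets take values in a complete
lattice. -/
def acri (A Imp : L → L → L) (D D' : U → L) (B : V → L) (y : V) : L :=
  ⨆ x, A (D' x) (Imp (D x) (B y))

variable {A Imp : L → L → L} {D D' D'' : U → L} {B : V → L}

lemma imp_le_acri_of_eq_top (hneut : ∀ z, A ⊤ z = z) {x : U} (hx : D' x = ⊤) (y : V) :
    Imp (D x) (B y) ≤ acri A Imp D D' B y :=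
  calc Imp (D x) (B y) = A (D' x) (Imp (D x) (B y)) := by rw [hx, hneut]
    _ ≤ acri A Imp D D' B y := le_iSup (fun u => A (D' u) (Imp (D u) (B y))) x

lemma le_acri_of_normal (hneut : ∀ z, A ⊤ z = z) (hImp : ∀ x y, y ≤ Imp x y)
    (hD' : ∃ x₀, D' x₀ = ⊤) (y : V) : B y ≤ acri A Imp D D' B y :=
  let ⟨x₀, hx₀⟩ := hD'
  (hImp (D x₀) (B y)).trans (imp_le_acri_of_eq_top hneut hx₀ y)

lemma acri_mono (hmono : ∀ z, Monotone fun x => A x z) (h : ∀ x, D' x ≤ D'' x) (y : V) :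
    acri A Imp D D' B y ≤ acri A Imp D D'' B y :=
  iSup_mono fun x => hmono _ (h x)

lemma acri_eq_top (hneut : ∀ z, A ⊤ z = z) (hImp : ∀ y, Imp ⊥ y = ⊤)
    (h : ∃ x₀, D' x₀ = ⊤ ∧ D x₀ = ⊥) (y : V) : acri A Imp D D' B y = ⊤ := by
  obtain ⟨x₀, hD', hD⟩ := h
  have hle := imp_le_acri_of_eq_top (Imp := Imp) (D := D) (B := B) hneut hD' y
  rwa [hD, hImp, top_le_iff] at hle

lemma acri_self_le (h : ∀ x y, A x (Imp x y) ≤ y) (y : V) : acri A Imp D D B y ≤ B y :=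
  iSup_le fun x => h (D x) (B y)

lemma apply_imp_le_of_acri_self_le [Nontrivial U] [Nonempty V]
    (h : ∀ (D : U → L) (B : V → L), (∃ x₀, D x₀ = ⊤) → ∀ y, acri A Imp D D B y ≤ B y)
    (x y : L) : A x (Imp x y) ≤ y := by
  classical
  obtain ⟨u₀, u₁, hne⟩ := exists_pair_ne U
  obtain ⟨v⟩ := ‹Nonempty V›
  let D : U → L := Function.update (fun _ => x) u₀ ⊤
  have hD₀ : D u₀ = ⊤ := Function.update_self ..
  have hD₁ : D u₁ = x := Function.update_of_ne hne.symm ..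
  calc A x (Imp x y) = A (D u₁) (Imp (D u₁) y) := by rw [hD₁]
    _ ≤ acri A Imp D D (fun _ : V => y) v := le_iSup (fun u => A (D u) (Imp (D u) y)) u₁
    _ ≤ y := h D (fun _ => y) ⟨u₀, hD₀⟩ v

end ACRI

universe u v w

theorem stmt9_general {L : Type w} [CompleteLattice L] {A Imp : L → L → L} {compl : L → L}
    (hAmono : ∀ z, Monotone fun x => A x z) (hAcont : ∀ x, LeftOrdContinuous (A x))
    (hneut : ∀ z, A ⊤ z = z) (hImp_bot : ∀ y, Imp ⊥ y = ⊤) (hle_Imp : ∀ x y, y ≤ Imp x y)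
    (hcompl : ∀ x, compl x = ⊤ → x = ⊥) :
    (∀ (U : Type u) (V : Type v), Nonempty U → Nonempty V →
      ∀ (D D' D'' : U → L) (B : V → L),
        ((∃ x₀, D' x₀ = ⊤) → ∀ y, B y ≤ acri A Imp D D' B y)
        ∧ ((∀ x, D' x ≤ D'' x) → ∀ y, acri A Imp D D' B y ≤ acri A Imp D D'' B y)
        ∧ ((D' = fun x => compl (D x)) → (∃ x₀, D' x₀ = ⊤) → ∀ y, acri A Imp D D' B y = ⊤)
        ∧ (D' = D → (∃ x₀, D x₀ = ⊤) → ∀ y, acri A Imp D D' B y = B y))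
    ↔ ∀ x y, Imp x y ≤ sSup {z | A x z ≤ y} := by
  have residuation := galoisConnection_sSup_of_leftNeutral hAmono hAcont hneut
  constructor
  · intro hGMP x y
    refine (residuation x).le_u (apply_imp_le_of_acri_self_le (U := ULift Bool) (V := PUnit) ?_ x y)
    intro D B hD v
    obtain ⟨-, -, -, gmp4⟩ := hGMP _ _ inferInstance inferInstance D D D B
    exact (gmp4 rfl hD v).le
  · intro hle U V _ _ D D' D'' B
    refine ⟨le_acri_of_normal hneut hle_Imp, acri_mono hAmono, ?_, ?_⟩
    · rintro rfl ⟨x₀, hx₀⟩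
      exact acri_eq_top hneut hImp_bot ⟨x₀, hx₀, hcompl _ hx₀⟩
    · rintro rfl hD' y
      exact (acri_self_le (fun x z => (residuation x).l_le (hle x z)) y).antisymm
        (le_acri_of_normal hneut hle_Imp hD' y)

/-- Theorem 4.7: let `A` be an aggregation function that is left-continuous in its
second variable with left neutral element `1`, and `I` a fuzzy implication satisfying
(NP).  Then the ACRI method based on `A` and `I` satisfies (GMP1)–(GMP4) if and only
if `I ≤ I_A`. -/
theorem stmt9 (A : unitInterval → unitInterval → unitInterval)
    (hAmono₁ : ∀ y : unitInterval, Monotone fun x => A x y)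
    (hAmono₂ : ∀ x : unitInterval, Monotone (A x))
    (hA00 : A 0 0 = 0) (hA11 : A 1 1 = 1)
    (hlc : ∀ (x z : unitInterval), z ≠ 0 → ContinuousWithinAt (A x) (Set.Iio z) z)
    (hneut : ∀ x : unitInterval, A 1 x = x)
    (Imp : unitInterval → unitInterval → unitInterval)
    (hImono₁ : ∀ y : unitInterval, Antitone fun x => Imp x y)
    (hImono₂ : ∀ x : unitInterval, Monotone (Imp x))
    (hI00 : Imp 0 0 = 1) (hI11 : Imp 1 1 = 1) (hI10 : Imp 1 0 = 0)
    (hNP : ∀ y : unitInterval, Imp 1 y = y) :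
    (∀ (U V : Type), Nonempty U → Nonempty V →
      ∀ (D D' D'' : U → unitInterval) (B : V → unitInterval),
        -- (GMP1)
        ((∃ x₀ : U, D' x₀ = 1) →
          ∀ y : V, B y ≤ ⨆ x : U, A (D' x) (Imp (D x) (B y)))
        -- (GMP2)
        ∧ ((∀ x : U, D' x ≤ D'' x) →
          ∀ y : V, (⨆ x : U, A (D' x) (Imp (D x) (B y)))
            ≤ ⨆ x : U, A (D'' x) (Imp (D x) (B y)))
        -- (GMP3)
        ∧ ((D' = fun x => unitInterval.symm (D x)) → (∃ x₀ : U, D' x₀ = 1) →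
          ∀ y : V, (⨆ x : U, A (D' x) (Imp (D x) (B y))) = 1)
        -- (GMP4)
        ∧ (D' = D → (∃ x₀ : U, D x₀ = 1) →
          ∀ y : V, (⨆ x : U, A (D' x) (Imp (D x) (B y))) = B y))
    ↔ (∀ x y : unitInterval, Imp x y ≤ resid A x y) :=
  stmt9_general hAmono₁
    (fun x => leftOrdContinuous_of_continuousWithinAt_Iio (hAmono₂ x) (hlc x)) hneut
    (fun _ => top_le_iff.mp (hI00.ge.trans (hImono₂ 0 bot_le)))
    (fun _ y => (hNP y).ge.trans (hImono₁ y le_top)) (fun _ => unitInterval.symm_eq_one.mp)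
end

section
/- Let U, V be nonempty sets, S a similarity measure on U, and A : [0,1]² → [0,1] a binary aggregation function having 1 as a left neutral element (A(1,x) = x for all x). Let D be a normal fuzzy set on U and B a fuzzy set on V. Then with D' = D the inferred conclusion satisfies B'_3(y) = sup_{x ∈ U} A(S(D,D), A(D(x), B(y))) = B(y) for all y ∈ V. -/
/-- A similarity measure on the fuzzy sets of a universe `U` (Definition 2.14). -/
structure SimilarityMeasure (U : Type) where
  S : (U → unitInterval) → (U → unitInterval) → unitInterval
  symm : ∀ D D' : U → unitInterval, S D D' = S D' D
  eq_one_iff : ∀ D D' : U → unitInterval, S D D' = 1 ↔ D = D'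
  eq_zero : ∀ D D' : U → unitInterval, S D D' = 0 → ∀ x : U, min (D x) (D' x) = 0
  le_min : ∀ D D' D'' : U → unitInterval, (∀ x, D x ≤ D' x) → (∀ x, D' x ≤ D'' x) →
    S D D'' ≤ min (S D D') (S D' D'')

theorem iSup_comp_eq_apply_top {ι : Sort*} {α β : Type*} [Preorder α] [OrderTop α]
    [CompleteLattice β] {f : α → β} (hf : Monotone f) {g : ι → α} {i : ι} (hi : g i = ⊤) :
    ⨆ j, f (g j) = f ⊤ :=
  le_antisymm (iSup_le fun _ => hf le_top) (hi ▸ le_iSup (fun j => f (g j)) i)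

theorem stmt17_general {U V L : Type*} [CompleteLattice L]
    (S : (U → L) → (U → L) → L) (hS : ∀ D, S D D = ⊤)
    (A : L → L → L) (hA : ∀ b, Monotone fun a => A a b) (hA_top : ∀ b, A ⊤ b = b)
    (D : U → L) (hD : ∃ x₀, D x₀ = ⊤) (B : V → L) (y : V) :
    ⨆ x, A (S D D) (A (D x) (B y)) = B y := by
  obtain ⟨x₀, hx₀⟩ := hD
  calc ⨆ x, A (S D D) (A (D x) (B y))
      = ⨆ x, A (D x) (B y) := by simp only [hS, hA_top]
    _ = A ⊤ (B y) := iSup_comp_eq_apply_top (hA (B y)) hx₀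
    _ = B y := hA_top (B y)

theorem SimilarityMeasure.S_self {U : Type} (S : SimilarityMeasure U) (D : U → unitInterval) :
    S.S D D = 1 :=
  (S.eq_one_iff D D).2 rfl

/-- Lemma 5.8: if `A` has left neutral element `1` and `D` is normal, then with
`D' = D` the conclusion `B'_3(y) = sup_x A(S(D,D), A(D(x),B(y)))` equals `B(y)`,
i.e. the `B'_3` method satisfies (GMP4). -/
theorem stmt17 (U V : Type) [Nonempty U] [Nonempty V] (S : SimilarityMeasure U)
    (A : unitInterval → unitInterval → unitInterval)
    (hAmono₁ : ∀ y : unitInterval, Monotone fun x => A x y)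
    (hAmono₂ : ∀ x : unitInterval, Monotone (A x))
    (hA00 : A 0 0 = 0) (hA11 : A 1 1 = 1)
    (hneut : ∀ x : unitInterval, A 1 x = x)
    (D : U → unitInterval) (hD : ∃ x₀ : U, D x₀ = 1)
    (B : V → unitInterval) :
    ∀ y : V, (⨆ x : U, A (S.S D D) (A (D x) (B y))) = B y :=
  -- In `unitInterval`, `1` and `⊤` are definitionally equal.
  stmt17_general S.S S.S_self A hAmono₁ hneut D hD B
end

section
/- Let I : [0,1]² → [0,1] be a fuzzy implication that is right-continuous in its second variable and satisfies (NP) (I(1,y) = y for all y) and (OP) (I(x,y) = 1 if and only if x ≤ y), and let A_I(x,y) = inf{z ∈ [0,1] : I(x,z) ≥ y}. Let U, V be nonempty sets, D a normal fuzzy set on U and B a fuzzy set on V. Then the QIP solution of fuzzy modus ponens with input D' = D reproduces B exactly: sup_{x ∈ U} A_I(D(x), A_I(I(D(x),D(x)), A_I(I(D(x),B(y)), 1))) = B(y) for all y ∈ V. -/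
/-!
Each term of the supremum loses its two inner conjunctions: (OP) gives
`A_I(a, ⊤) = inf {z | a ≤ z} = a`, and (OP) with (NP) gives `A_I(I(d, d), b) = A_I(⊤, b) = b`. The
remaining term `A_I(d, I(d, b))` is at most `b`, because `b` belongs to the set whose infimum is
taken, and it equals `b` at a point where `d = ⊤`.
-/

section CompleteLattice

variable {α : Type*} [CompleteLattice α] {U V : Type*}

/-- The conjunction `A_I` induced by an implication `I` on a complete lattice; on the unit interval
it is `coresid`. -/
def inducedConj (I : α → α → α) (x y : α) : α :=
  sInf {z | y ≤ I x z}

/-- The QIP solution `B'` of fuzzy modus ponens: the conclusion drawn from the input `D'` and the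
rule `D → B`, for fuzzy sets with truth values in a complete lattice. -/
def qipSolution (I : α → α → α) (D' D : U → α) (B : V → α) (y : V) : α :=
  ⨆ x, inducedConj I (D' x) (inducedConj I (I (D' x) (D x)) (inducedConj I (I (D x) (B y)) ⊤))

variable {I : α → α → α}

theorem inducedConj_le {x y z : α} (h : y ≤ I x z) : inducedConj I x y ≤ z :=
  sInf_le h

theorem inducedConj_top_right {x : α} (hOP : ∀ z, I x z = ⊤ ↔ x ≤ z) :
    inducedConj I x ⊤ = x := by
  simp only [inducedConj, top_le_iff, hOP]
  exact csInf_Ici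

theorem inducedConj_top_left (hNP : ∀ z, I ⊤ z = z) (y : α) : inducedConj I ⊤ y = y := by
  simp only [inducedConj, hNP]
  exact csInf_Ici

theorem qipSolution_self_apply (hNP : ∀ z, I ⊤ z = z) (hOP : ∀ x z, I x z = ⊤ ↔ x ≤ z)
    (D : U → α) (B : V → α) (y : V) :
    qipSolution I D D B y = ⨆ x, inducedConj I (D x) (I (D x) (B y)) := by
  refine iSup_congr fun x => ?_
  rw [inducedConj_top_right (hOP _), (hOP (D x) (D x)).2 le_rfl, inducedConj_top_left hNP]

theorem stmt19_general (hNP : ∀ z, I ⊤ z = z) (hOP : ∀ x z, I x z = ⊤ ↔ x ≤ z)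
    {D : U → α} (hD : ∃ x₀, D x₀ = ⊤) (B : V → α) : qipSolution I D D B = B := by
  funext y
  rw [qipSolution_self_apply hNP hOP]
  obtain ⟨x₀, hx₀⟩ := hD
  have attained : inducedConj I (D x₀) (I (D x₀) (B y)) = B y := by
    rw [hx₀, hNP, inducedConj_top_left hNP]
  exact le_antisymm (iSup_le fun _ => inducedConj_le le_rfl) (le_iSup_of_le x₀ attained.ge)

end CompleteLattice

/-- Lemma 6.6: if `I` is right-continuous in its second variable and satisfies (NP)
and (IP/OP), and `D` is normal, then the QIP solution of FMP with input `D' = D`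
reproduces `B` exactly, i.e. the AQIP method satisfies (GMP4). -/
theorem stmt19 (Imp : unitInterval → unitInterval → unitInterval)
    (hImono₁ : ∀ y : unitInterval, Antitone fun x => Imp x y)
    (hImono₂ : ∀ x : unitInterval, Monotone (Imp x))
    (hI00 : Imp 0 0 = 1) (hI11 : Imp 1 1 = 1) (hI10 : Imp 1 0 = 0)
    (hrc : ∀ (x z : unitInterval), z ≠ 1 → ContinuousWithinAt (Imp x) (Set.Ioi z) z)
    (hNP : ∀ y : unitInterval, Imp 1 y = y)
    (hOP : ∀ x y : unitInterval, Imp x y = 1 ↔ x ≤ y)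
    (U V : Type) [Nonempty U] [Nonempty V]
    (D : U → unitInterval) (hD : ∃ x₀ : U, D x₀ = 1)
    (B : V → unitInterval) :
    ∀ y : V,
      (⨆ x : U, coresid Imp (D x) (coresid Imp (Imp (D x) (D x))
        (coresid Imp (Imp (D x) (B y)) 1))) = B y :=
  congrFun (stmt19_general hNP hOP hD B)
end
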